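/- Let f be C¹-smooth on an open neighbourhood of S^{n-1} (with n ≥ 2). Then the vector identity ∫ f(θ) θ dσ_{n-1}(θ) = (1/(n−1)) ∫ ∇_S f(θ) dσ_{n-1}(θ) holds. In particular, the restriction of f to S^{n-1} is orthogonal to all linear functions if and only if ∫ ⟨∇_S f(θ), v⟩ dσ_{n-1}(θ) = 0 for every v ∈ ℝ^n. -/

import Mathlib

open MeasureTheory Metric Filter
open scoped RealInnerProductSpace ENNReal NNReal

noncomputable section

namespace SecondOrderConc

/-- Euclidean space ℝⁿ. -/
abbrev E (n : ℕ) : Type := EuclideanSpace ℝ (Fin n)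

/-- The uniform (normalized rotation-invariant) probability measure `σ_{n-1}`
on the unit sphere `S^{n-1}`, viewed as a measure on the ambient space ℝⁿ. -/
def sphMeasure (n : ℕ) : Measure (E n) :=
  ((((volume : Measure (E n)).toSphere).map Subtype.val) Set.univ)⁻¹ •
    (((volume : Measure (E n)).toSphere).map Subtype.val)

variable {n : ℕ}

/-- Euclidean Hessian of `f` at `x`, as a continuous linear operator on ℝⁿ. -/
def hess (f : E n → ℝ) (x : E n) : E n →L[ℝ] E n :=
  fderiv ℝ (gradient f) x

/-- Squared Hilbert–Schmidt norm of an operator on ℝⁿ. -/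
def hsNormSq (A : E n →L[ℝ] E n) : ℝ :=
  ∑ i : Fin n, ‖A (EuclideanSpace.single i 1)‖ ^ 2

/-- Orthogonal projection of ℝⁿ onto `θ^⊥` (for a unit vector `θ`). -/
def projPerp (θ : E n) : E n →L[ℝ] E n :=
  ContinuousLinearMap.id ℝ (E n) - (innerSL ℝ θ).smulRight θ

/-- Spherical gradient `∇_S f(θ) = ∇f(θ) − ⟨∇f(θ),θ⟩θ`. -/
def sgrad (f : E n → ℝ) (θ : E n) : E n :=
  gradient f θ - ⟪gradient f θ, θ⟫ • θ

/-- Spherical Hessian `f''_S(θ) = P_{θ^⊥} (f''(θ) − ⟨∇f(θ),θ⟩ I_n) P_{θ^⊥}`. -/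
def sHess (f : E n → ℝ) (θ : E n) : E n →L[ℝ] E n :=
  (projPerp θ).comp
    ((hess f θ - ⟪gradient f θ, θ⟫ • ContinuousLinearMap.id ℝ (E n)).comp (projPerp θ))

/-- Spherical Laplacian `Δ_S f(θ) = Tr f''_S(θ)`. -/
def sLap (f : E n → ℝ) (θ : E n) : ℝ :=
  LinearMap.trace ℝ (E n) (sHess f θ).toLinearMap

/-- Euclidean Laplacian `Δ f = Tr f''`. -/
def eLap (f : E n → ℝ) (x : E n) : ℝ :=
  LinearMap.trace ℝ (E n) (hess f x).toLinearMap

/-- 0-homogeneous extension to `ℝⁿ \ {0}` of (the restriction to the sphere of) `g`. -/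
def ext0 (g : E n → ℝ) : E n → ℝ := fun x => g (‖x‖⁻¹ • x)

open scoped Pointwise in
/-- The cone measure on the unit sphere is invariant under linear isometries. -/
theorem map_toSphere_map_linearIsometryEquiv {V : Type*} [NormedAddCommGroup V]
    [InnerProductSpace ℝ V] [FiniteDimensional ℝ V] [MeasurableSpace V] [BorelSpace V]
    (R : V ≃ₗᵢ[ℝ] V) :
    ((volume : Measure V).toSphere.map Subtype.val).map R =
      (volume : Measure V).toSphere.map Subtype.val := by
  have hR : Measurable R := R.continuous.measurable
  ext s hs
  rw [Measure.map_apply hR hs, Measure.map_apply measurable_subtype_coe (hR hs),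
    Measure.map_apply measurable_subtype_coe hs,
    Measure.toSphere_apply' _ (measurable_subtype_coe (hR hs)),
    Measure.toSphere_apply' _ (measurable_subtype_coe hs),
    Subtype.image_preimage_coe, Subtype.image_preimage_coe,
    ← R.measurePreserving.measure_preimage_emb R.toHomeomorph.measurableEmbedding
      (Set.Ioo (0 : ℝ) 1 • (sphere 0 1 ∩ s))]
  congr 2
  ext x
  simp only [Set.mem_smul, Set.mem_inter_iff, Set.mem_preimage, mem_sphere_zero_iff_norm]
  constructor
  · rintro ⟨c, hc, y, ⟨hy, hys⟩, rfl⟩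
    exact ⟨c, hc, R y, ⟨by simpa using hy, hys⟩, by simp⟩
  · rintro ⟨c, hc, y, ⟨hy, hys⟩, h⟩
    exact ⟨c, hc, R.symm y, ⟨by simpa using hy, by simpa using hys⟩, by
      rw [← map_smul, h, R.symm_apply_apply]⟩

theorem measurePreserving_sphMeasure (R : E n ≃ₗᵢ[ℝ] E n) :
    MeasurePreserving R (sphMeasure n) (sphMeasure n) :=
  ⟨R.continuous.measurable, by
    rw [sphMeasure, Measure.map_smul, map_toSphere_map_linearIsometryEquiv]⟩

theorem ae_mem_sphere_sphMeasure : ∀ᵐ θ ∂sphMeasure n, θ ∈ sphere (0 : E n) 1 := by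
  refine Measure.ae_smul_measure ?_ _
  exact (ae_map_iff measurable_subtype_coe.aemeasurable isClosed_sphere.measurableSet).mpr
    (ae_of_all _ fun x => x.2)

theorem isProbabilityMeasure_sphMeasure (hn : n ≠ 0) : IsProbabilityMeasure (sphMeasure n) := by
  have : Nonempty (Fin n) := ⟨⟨0, Nat.pos_of_ne_zero hn⟩⟩
  have : Nontrivial (E n) := inferInstance
  refine ⟨?_⟩
  rw [sphMeasure, Measure.smul_apply, smul_eq_mul]
  refine ENNReal.inv_mul_cancel ?_ (measure_ne_top _ _)
  rw [Measure.map_apply measurable_subtype_coe .univ, Set.preimage_univ,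
    Measure.measure_univ_ne_zero]
  exact Measure.toSphere_ne_zero _

theorem integrable_sphMeasure_of_continuousOn [IsFiniteMeasure (sphMeasure n)]
    {F : Type*} [NormedAddCommGroup F] {g : E n → F}
    (hg : ContinuousOn g (sphere 0 1)) : Integrable g (sphMeasure n) := by
  rw [← Measure.restrict_eq_self_of_ae_mem (ae_mem_sphere_sphMeasure (n := n))]
  exact hg.integrableOn_compact (isCompact_sphere 0 1)

/-- A skew-adjoint operator generates a flow of isometries, so the derivative of a function
along the corresponding vector field has mean zero on the sphere. -/
theorem integral_fderiv_skewAdjoint_eq_zero [IsFiniteMeasure (sphMeasure n)]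
    {A : E n →L[ℝ] E n} (hA : A ∈ skewAdjoint (E n →L[ℝ] E n)) {g : E n → ℝ}
    (hd : ∀ θ ∈ sphere (0 : E n) 1, DifferentiableAt ℝ g θ)
    (hc : ContinuousOn (fderiv ℝ g) (sphere 0 1)) :
    ∫ θ, fderiv ℝ g θ (A θ) ∂sphMeasure n = 0 := by
  let : NormedAlgebra ℚ (E n →L[ℝ] E n) := NormedAlgebra.restrictScalars ℚ ℝ _
  let u (t : ℝ) : unitary (E n →L[ℝ] E n) := ⟨NormedSpace.exp (t • A),
    NormedSpace.exp_mem_unitary_of_mem_skewAdjoint (skewAdjoint.smul_mem t hA)⟩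
  let R (t : ℝ) : E n ≃ₗᵢ[ℝ] E n := Unitary.linearIsometryEquiv (u t)
  have hR (t : ℝ) (θ : E n) : R t θ = NormedSpace.exp (t • A) θ := rfl
  have hRmem (t : ℝ) {θ : E n} (hθ : θ ∈ sphere (0 : E n) 1) : R t θ ∈ sphere (0 : E n) 1 := by
    simpa using hθ
  have hR0 (θ : E n) : R 0 θ = θ := by
    have h : NormedSpace.exp ((0 : ℝ) • A) = 1 := by rw [zero_smul ℝ A, NormedSpace.exp_zero]
    rw [hR, h, one_apply_eq_self]
  have hRd (t : ℝ) (θ : E n) : HasDerivAt (fun s => R s θ) (A (R t θ)) t := by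
    have h := (hasDerivAt_exp_smul_const' (𝕂 := ℝ) A t).clm_apply (hasDerivAt_const t θ)
    rw [map_zero, add_zero] at h
    exact h
  have hgc : ContinuousOn g (sphere 0 1) := fun θ hθ => (hd θ hθ).continuousAt.continuousWithinAt
  have hgc' : ContinuousOn (fun θ => fderiv ℝ g θ (A θ)) (sphere 0 1) :=
    hc.clm_apply A.continuous.continuousOn
  obtain ⟨C, hC⟩ := (isCompact_sphere (0 : E n) 1).exists_bound_of_continuousOn hgc'
  have key := (hasDerivAt_integral_of_dominated_loc_of_deriv_le (μ := sphMeasure n)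
    (F := fun t θ => g (R t θ)) (F' := fun t θ => fderiv ℝ g (R t θ) (A (R t θ)))
    (x₀ := (0 : ℝ)) (s := Set.univ) (bound := fun _ => C) univ_mem
    (Eventually.of_forall fun t => (integrable_sphMeasure_of_continuousOn
      (hgc.comp (R t).continuous.continuousOn fun θ hθ => hRmem t hθ)).aestronglyMeasurable)
    (by simpa only [hR0] using integrable_sphMeasure_of_continuousOn hgc)
    (by simpa only [hR0] using
      (integrable_sphMeasure_of_continuousOn hgc').aestronglyMeasurable)
    (ae_mem_sphere_sphMeasure.mono fun θ hθ t _ => hC _ (hRmem t hθ))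
    (integrable_const C)
    (ae_mem_sphere_sphMeasure.mono fun θ hθ t _ =>
      (hd _ (hRmem t hθ)).hasFDerivAt.comp_hasDerivAt t (hRd t θ))).2
  simp only [hR0, fun t => (measurePreserving_sphMeasure (R t)).integral_comp
    (R t).toHomeomorph.measurableEmbedding g] at key
  exact key.unique (hasDerivAt_const _ _)

/-- The infinitesimal rotation in the plane spanned by `u` and `v`. -/
def planeRotation (u v : E n) : E n →L[ℝ] E n :=
  (innerSL ℝ u).smulRight v - (innerSL ℝ v).smulRight u

theorem planeRotation_apply (u v x : E n) : planeRotation u v x = ⟪u, x⟫ • v - ⟪v, x⟫ • u := rfl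

theorem planeRotation_mem_skewAdjoint (u v : E n) :
    planeRotation u v ∈ skewAdjoint (E n →L[ℝ] E n) := by
  rw [skewAdjoint.mem_iff, ContinuousLinearMap.star_eq_adjoint, eq_comm,
    ContinuousLinearMap.eq_adjoint_iff]
  intro x y
  simp only [_root_.neg_apply, planeRotation_apply, inner_neg_left, inner_sub_left,
    inner_sub_right, real_inner_smul_left, real_inner_smul_right]
  rw [real_inner_comm u x, real_inner_comm v x]
  ring

theorem inner_gradient_eq_fderiv (f : E n → ℝ) (x v : E n) :
    ⟪gradient f x, v⟫ = fderiv ℝ f x v :=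
  InnerProductSpace.toDual_symm_apply

theorem inner_sgrad (f : E n → ℝ) (θ v : E n) :
    ⟪sgrad f θ, v⟫ = fderiv ℝ f θ v - fderiv ℝ f θ θ * ⟪v, θ⟫ := by
  rw [sgrad, inner_sub_left, real_inner_smul_left, inner_gradient_eq_fderiv,
    inner_gradient_eq_fderiv, real_inner_comm v θ]

/-- Contracting the derivatives of `f θⱼ` along the rotations in the planes `(v, eⱼ)`. -/
theorem sum_fderiv_mul_inner_planeRotation {f : E n → ℝ} {θ : E n} (hθ : θ ∈ sphere (0 : E n) 1)
    (hf : DifferentiableAt ℝ f θ) (v : E n) :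
    ∑ j, fderiv ℝ (fun x => f x * ⟪EuclideanSpace.single j (1 : ℝ), x⟫) θ
        (planeRotation v (EuclideanSpace.single j 1) θ) =
      ((n : ℝ) - 1) * (⟪v, θ⟫ * f θ) - ⟪sgrad f θ, v⟫ := by
  let b := EuclideanSpace.basisFun (Fin n) ℝ
  have hb (j : Fin n) : EuclideanSpace.single j (1 : ℝ) = b j := by simp [b]
  have hθ' : ⟪θ, θ⟫ = 1 := by
    rw [real_inner_self_eq_norm_sq, mem_sphere_zero_iff_norm.mp hθ, one_pow]
  have hderiv (j : Fin n) : fderiv ℝ (fun x => f x * ⟪b j, x⟫) θ (planeRotation v (b j) θ) =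
      f θ * ⟪v, θ⟫ - f θ * (⟪v, b j⟫ * ⟪b j, θ⟫) +
        (⟪v, θ⟫ * fderiv ℝ f θ (⟪b j, θ⟫ • b j) -
          ⟪θ, b j⟫ * ⟪b j, θ⟫ * fderiv ℝ f θ v) := by
    have h : HasFDerivAt (fun x => f x * ⟪b j, x⟫)
        (f θ • innerSL ℝ (b j) + ⟪b j, θ⟫ • fderiv ℝ f θ) θ :=
      hf.hasFDerivAt.mul (innerSL ℝ (b j)).hasFDerivAt
    have hbb : ⟪b j, b j⟫ = 1 := by simp
    rw [h.fderiv]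
    simp only [_root_.add_apply, _root_.smul_apply, innerSL_apply_apply,
      planeRotation_apply, map_sub, map_smul, smul_eq_mul,
      hbb, real_inner_comm v (b j), real_inner_comm θ (b j)]
    ring
  simp only [hb, hderiv, Finset.sum_add_distrib, Finset.sum_sub_distrib, ← Finset.mul_sum,
    ← Finset.sum_mul, ← map_sum, b.sum_inner_mul_inner, b.sum_repr', hθ', inner_sgrad,
    Finset.sum_const, Finset.card_univ, Fintype.card_fin, nsmul_eq_mul]
  ring

/-- **Proposition 14.1 (Statement 18).** Vector identity relating `∫ fθ dσ` to the
mean of the spherical gradient, and the resulting characterization of orthogonality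
to linear functions. -/
theorem integral_smul_eq_integral_sgrad
    {n : ℕ} (hn : 2 ≤ n) (f : E n → ℝ) (U : Set (E n)) (hU : IsOpen U)
    (hUS : Metric.sphere (0 : E n) 1 ⊆ U) (hf : ContDiffOn ℝ 1 f U) :
    (∫ θ, f θ • θ ∂sphMeasure n = (((n : ℝ) - 1))⁻¹ • ∫ θ, sgrad f θ ∂sphMeasure n) ∧
    ((∀ v : E n, ∫ θ, ⟪v, θ⟫ * f θ ∂sphMeasure n = 0) ↔
      (∀ v : E n, ∫ θ, ⟪sgrad f θ, v⟫ ∂sphMeasure n = 0)) := by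
  have := isProbabilityMeasure_sphMeasure (n := n) (by omega)
  have hn' : (n : ℝ) - 1 ≠ 0 := by
    have : (2 : ℝ) ≤ n := by exact_mod_cast hn
    linarith
  have hfd : ∀ θ ∈ sphere (0 : E n) 1, DifferentiableAt ℝ f θ := fun θ hθ =>
    (hf.differentiableOn one_ne_zero).differentiableAt (hU.mem_nhds (hUS hθ))
  have hfc : ContinuousOn f (sphere 0 1) := hf.continuousOn.mono hUS
  have hfc' : ContinuousOn (fderiv ℝ f) (sphere 0 1) :=
    (hf.continuousOn_fderiv_of_isOpen hU le_rfl).mono hUS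
  have hgrad : ContinuousOn (gradient f) (sphere 0 1) :=
    (InnerProductSpace.toDual ℝ (E n)).symm.continuous.comp_continuousOn hfc'
  have hint₁ : Integrable (fun θ => f θ • θ) (sphMeasure n) :=
    integrable_sphMeasure_of_continuousOn (hfc.smul continuousOn_id)
  have hint₂ : Integrable (sgrad f) (sphMeasure n) :=
    integrable_sphMeasure_of_continuousOn
      (hgrad.sub ((hgrad.inner (𝕜 := ℝ) continuousOn_id).smul continuousOn_id))
  have hl (v : E n) : ∫ θ, ⟪v, θ⟫ * f θ ∂sphMeasure n = ⟪v, ∫ θ, f θ • θ ∂sphMeasure n⟫ := by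
    rw [← integral_inner hint₁]
    simp only [real_inner_smul_right, mul_comm]
  have hr (v : E n) : ∫ θ, ⟪sgrad f θ, v⟫ ∂sphMeasure n = ⟪v, ∫ θ, sgrad f θ ∂sphMeasure n⟫ := by
    rw [← integral_inner hint₂]
    simp only [real_inner_comm v]
  have key (v : E n) :
      ((n : ℝ) - 1) * ⟪v, ∫ θ, f θ • θ ∂sphMeasure n⟫ = ⟪v, ∫ θ, sgrad f θ ∂sphMeasure n⟫ := by
    rw [← hl, ← hr, ← sub_eq_zero, ← integral_const_mul, ← integral_sub]
    · have hg (j : Fin n) : ContDiffOn ℝ 1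
          (fun x => f x * ⟪EuclideanSpace.single j (1 : ℝ), x⟫) U :=
        hf.mul (innerSL ℝ (EuclideanSpace.single j (1 : ℝ))).contDiff.contDiffOn
      have hgc (j : Fin n) := (hg j).continuousOn_fderiv_of_isOpen hU le_rfl |>.mono hUS
      rw [← integral_congr_ae (ae_mem_sphere_sphMeasure.mono fun θ hθ =>
          sum_fderiv_mul_inner_planeRotation hθ (hfd θ hθ) v),
        integral_finsetSum _ fun j _ => integrable_sphMeasure_of_continuousOn
          ((hgc j).clm_apply (planeRotation _ _).continuous.continuousOn)]
      exact Finset.sum_eq_zero fun j _ => integral_fderiv_skewAdjoint_eq_zero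
        (planeRotation_mem_skewAdjoint _ _)
        (fun θ hθ => ((hg j).differentiableOn one_ne_zero).differentiableAt
          (hU.mem_nhds (hUS hθ))) (hgc j)
    · exact (integrable_sphMeasure_of_continuousOn
        ((continuousOn_const.inner continuousOn_id).mul hfc)).const_mul _
    · exact hint₂.inner_const v
  refine ⟨ext_inner_left ℝ fun v => ?_, forall_congr' fun v => ?_⟩
  · rw [real_inner_smul_right, ← key, inv_mul_cancel_left₀ hn']
  · rw [hl, hr, ← key, mul_eq_zero, or_iff_right hn']

end SecondOrderConc
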